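/- arXiv:2501.10552 — 3 statements merged into one kernel-verified Lean document; each statement's English description precedes it below -/
import Mathlib

section
/- Let E_1, …, E_N be quantum channels on M_d(ℂ), and for each i set L_i := E_i − id. If the maps L_i pairwise commute (L_i ∘ L_j = L_j ∘ L_i for all i, j), then the Lindbladian L := Σ_{i=1}^N L_i is frustration-free: for every X ∈ M_d(ℂ), Σ_{i=1}^N L_i(X) = 0 implies L_i(X) = 0 for every i. -/
open Matrix Kronecker
open scoped ComplexOrder

/-- The Choi matrix of a linear map on `d × d` complex matrices. -/
noncomputable def ChoiMatrix {d : ℕ}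
    (E : Matrix (Fin d) (Fin d) ℂ →ₗ[ℂ] Matrix (Fin d) (Fin d) ℂ) :
    Matrix (Fin d × Fin d) (Fin d × Fin d) ℂ :=
  ∑ i : Fin d, ∑ j : Fin d,
    (E (Matrix.single i j 1)) ⊗ₖ (Matrix.single i j 1)

/-- A quantum channel: completely positive (positive semidefinite Choi matrix)
and trace-preserving. -/
def IsQuantumChannel {d : ℕ}
    (E : Matrix (Fin d) (Fin d) ℂ →ₗ[ℂ] Matrix (Fin d) (Fin d) ℂ) : Prop :=
  (ChoiMatrix E).PosSemidef ∧ ∀ X, (E X).trace = X.trace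

/-!
A fixed point `X` of the average of commuting maps `E i` makes `g ↦ g X` a harmonic function, on
the commutative monoid generated by the `E i`, for the random walk that multiplies by a uniformly
chosen `E i`. Positive maps which do not increase the trace have bounded orbits, so this function
is bounded, hence invariant under each step by the Choquet–Deny theorem; that is, `E i X = X`.

The Choquet–Deny theorem is proved by the maximum principle. The increment
`f g = h (g * s) - h g` of a bounded harmonic `h` is again harmonic. If its supremum `M` were
positive, then starting from a point where `f` is close enough to `M`, the value of `f` would stay
above a fixed `c > 0` along `g, g * s, …, g * s ^ (n - 1)`, and summing these `n` increments, with
`n` arbitrary, would make `h` unbounded.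
-/

section ChoquetDeny

variable {G ι F : Type*} [Fintype ι] {w : ι → ℝ} {s : ι → G}

/-- A function `h` on `G` is harmonic for the random walk which multiplies on the right by `s i`
with weight `w i` if it equals its weighted average over one step. The notion makes sense for
arbitrary real weights; the Choquet–Deny theorem is about the case of a probability `w`. -/
def IsHarmonic [Mul G] [AddCommMonoid F] [Module ℝ F] (w : ι → ℝ) (s : ι → G) (h : G → F) : Prop :=
  ∀ g, ∑ i, w i • h (g * s i) = h g

namespace IsHarmonic

theorem map [Mul G] {F' : Type*} [AddCommMonoid F] [Module ℝ F] [AddCommMonoid F'] [Module ℝ F']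
    {h : G → F} (hh : IsHarmonic w s h) (φ : F →ₗ[ℝ] F') : IsHarmonic w s (φ ∘ h) := fun g => by
  simp only [Function.comp_apply, ← map_smul, ← map_sum, hh g]

theorem increment [CommSemigroup G] [AddCommGroup F] [Module ℝ F] {h : G → F}
    (hh : IsHarmonic w s h) (a : G) :
    IsHarmonic w s fun g => h (g * a) - h g := fun g => by
  simp only [mul_right_comm g _ a, smul_sub, Finset.sum_sub_distrib, hh (g * a), hh g]

variable {h : G → ℝ} (hw : ∀ i, 0 ≤ w i) (hw1 : ∑ i, w i = 1)

include hw hw1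

theorem mul_sub_apply_mul_le [Mul G] (hh : IsHarmonic w s h) {M : ℝ} (hM : ∀ g, h g ≤ M) (i : ι)
    (g : G) : w i * (M - h (g * s i)) ≤ M - h g :=
  calc w i * (M - h (g * s i))
      ≤ ∑ j, w j * (M - h (g * s j)) :=
        Finset.single_le_sum (f := fun j => w j * (M - h (g * s j)))
          (fun j _ => mul_nonneg (hw j) (sub_nonneg.2 (hM _))) (Finset.mem_univ i)
    _ = M - h g := by
        simp only [mul_sub, Finset.sum_sub_distrib, ← Finset.sum_mul, hw1, one_mul,
          ← smul_eq_mul (w _) (h _), hh g]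

theorem pow_mul_sub_apply_mul_pow_le [Monoid G] (hh : IsHarmonic w s h) {M : ℝ} (hM : ∀ g, h g ≤ M)
    (i : ι) (g : G) (k : ℕ) : w i ^ k * (M - h (g * s i ^ k)) ≤ M - h g := by
  induction k with
  | zero => simp
  | succ k ih =>
    calc w i ^ (k + 1) * (M - h (g * s i ^ (k + 1)))
        = w i ^ k * (w i * (M - h (g * s i ^ k * s i))) := by
          rw [pow_succ, pow_succ, mul_assoc, mul_assoc]
      _ ≤ w i ^ k * (M - h (g * s i ^ k)) :=
        mul_le_mul_of_nonneg_left (hh.mul_sub_apply_mul_le hw hw1 hM i _) (pow_nonneg (hw i) k)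
      _ ≤ M - h g := ih

theorem exists_forall_lt_apply_mul_pow [Monoid G] (hh : IsHarmonic w s h)
    (hbdd : BddAbove (Set.range h)) {i : ι} (hi : 0 < w i) {c : ℝ} (hc : c < ⨆ g, h g) (n : ℕ) :
    ∃ g, ∀ k < n, c < h (g * s i ^ k) := by
  set M := ⨆ g, h g
  have hwi : w i ≤ 1 := hw1 ▸ Finset.single_le_sum (fun j _ => hw j) (Finset.mem_univ i)
  obtain ⟨g, hg⟩ : ∃ g, M - w i ^ n * (M - c) < h g :=
    exists_lt_of_lt_ciSup (sub_lt_self M (mul_pos (pow_pos hi n) (sub_pos.2 hc)))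
  refine ⟨g, fun k hk => ?_⟩
  have hdefect : w i ^ k * (M - h (g * s i ^ k)) < w i ^ k * (M - c) :=
    calc w i ^ k * (M - h (g * s i ^ k))
        ≤ M - h g := hh.pow_mul_sub_apply_mul_pow_le hw hw1 (le_ciSup hbdd) i g k
      _ < w i ^ n * (M - c) := sub_lt_comm.1 hg
      _ ≤ w i ^ k * (M - c) := mul_le_mul_of_nonneg_right
        (pow_le_pow_of_le_one hi.le hwi hk.le) (sub_pos.2 hc).le
  exact (sub_lt_sub_iff_left M).1 (lt_of_mul_lt_mul_left hdefect (pow_nonneg hi.le k))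

theorem apply_mul_le [CommMonoid G] (hh : IsHarmonic w s h)
    (hbdd : Bornology.IsBounded (Set.range h)) {i : ι} (hi : 0 < w i) (g : G) :
    h (g * s i) ≤ h g := by
  by_contra! hg
  obtain ⟨C, hC⟩ : ∃ C, ∀ a b, h a - h b ≤ C := by
    obtain ⟨C, hC⟩ := Metric.isBounded_range_iff.1 hbdd
    exact ⟨C, fun a b => (le_abs_self _).trans (hC a b)⟩
  set f : G → ℝ := fun g => h (g * s i) - h g
  have hf : BddAbove (Set.range f) := ⟨C, Set.forall_mem_range.2 fun g => hC _ _⟩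
  have hsup : 0 < ⨆ g, f g := (sub_pos.2 hg).trans_le (le_ciSup hf g)
  obtain ⟨c, hc0, hc⟩ := exists_between hsup
  obtain ⟨n, hn⟩ := exists_nat_gt (C / c)
  obtain ⟨a, ha⟩ := (hh.increment (s i)).exists_forall_lt_apply_mul_pow hw hw1 hf hi hc n
  have htelescope : ∑ k ∈ Finset.range n, f (a * s i ^ k) = h (a * s i ^ n) - h a := by
    simpa [f, pow_succ, mul_assoc] using Finset.sum_range_sub (fun k => h (a * s i ^ k)) n
  have hlinear : n * c ≤ ∑ k ∈ Finset.range n, f (a * s i ^ k) := by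
    simpa only [Finset.card_range, nsmul_eq_mul] using
      Finset.card_nsmul_le_sum (Finset.range n) (fun k => f (a * s i ^ k)) c
        fun k hk => (ha k (Finset.mem_range.1 hk)).le
  linarith [(div_lt_iff₀ hc0).1 hn, hC (a * s i ^ n) a]

/-- The **Choquet–Deny theorem** for commutative monoids. -/
theorem apply_mul_eq [CommMonoid G] [NormedAddCommGroup F] [NormedSpace ℝ F] {u : G → F}
    (hu : IsHarmonic w s u) (hbdd : Bornology.IsBounded (Set.range u))
    {i : ι} (hi : 0 < w i) (g : G) : u (g * s i) = u g := by
  by_contra hne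
  obtain ⟨φ, hφ⟩ := geometric_hahn_banach_point_point (Ne.symm hne)
  refine hφ.not_ge ((hu.map φ.toLinearMap).apply_mul_le hw hw1 ?_ hi g)
  rw [Set.range_comp]
  exact φ.lipschitz.isBounded_image hbdd

end IsHarmonic

end ChoquetDeny

open scoped IsMulCommutative in
theorem apply_eq_self_of_sum_smul_apply_eq_self {ι R F : Type*} [Fintype ι] [Semiring R]
    [NormedAddCommGroup F] [NormedSpace ℝ F] [Module R F] [LinearMap.CompatibleSMul F F ℝ R]
    {w : ι → ℝ} (hw : ∀ i, 0 ≤ w i) (hw1 : ∑ i, w i = 1) {T : ι → Module.End R F}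
    (hcomm : ∀ i j, Commute (T i) (T j)) {x : F}
    (hbdd : Bornology.IsBounded
      ((fun A : Module.End R F => A x) '' Submonoid.closure (Set.range T)))
    (hx : ∑ i, w i • T i x = x) {i : ι} (hi : 0 < w i) : T i x = x := by
  have : IsMulCommutative (Submonoid.closure (Set.range T)) :=
    Submonoid.isMulCommutative_closure _ <| by
      rintro _ ⟨i, rfl⟩ _ ⟨j, rfl⟩
      exact hcomm i j
  let s (i : ι) : Submonoid.closure (Set.range T) :=
    ⟨T i, Submonoid.subset_closure (Set.mem_range_self i)⟩
  let h (A : Submonoid.closure (Set.range T)) : F := (A : Module.End R F) x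
  have hh : IsHarmonic w s h := fun A =>
    calc ∑ i, w i • (A : Module.End R F) (T i x)
        = (A : Module.End R F) (∑ i, w i • T i x) := by
          simp only [map_sum, LinearMap.map_smul_of_tower]
      _ = (A : Module.End R F) x := by rw [hx]
  have hb : Bornology.IsBounded (Set.range h) := by rwa [Set.image_eq_range] at hbdd
  simpa [h, s] using hh.apply_mul_eq hw hw1 hb hi 1

section Positive

variable {n : Type*} [Fintype n]

/-- The monoid of linear maps of complex matrices which preserve positive semidefiniteness and do
not increase the trace of a positive semidefinite matrix. It contains all quantum channels, and
every matrix has a bounded orbit under it. -/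
def positiveTraceNonincreasing (n : Type*) [Fintype n] :
    Submonoid (Module.End ℂ (Matrix n n ℂ)) where
  carrier := {T | ∀ P, P.PosSemidef → (T P).PosSemidef ∧ (T P).trace ≤ P.trace}
  one_mem' := fun _ hP => ⟨hP, le_rfl⟩
  mul_mem' := fun {_ T} hS hT P hP =>
    have ⟨hTP, htr⟩ := hT P hP
    ⟨(hS (T P) hTP).1, (hS (T P) hTP).2.trans htr⟩

open scoped Matrix.Norms.L2Operator

theorem norm_le_re_trace_of_posSemidef {𝕜 : Type*} [RCLike 𝕜] [DecidableEq n] {P : Matrix n n 𝕜}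
    (hP : P.PosSemidef) : ‖P‖ ≤ RCLike.re P.trace := by
  have hnorm : ‖P‖ = ‖hP.1.eigenvalues‖ := by
    conv_lhs => rw [hP.1.spectral_theorem]
    rw [Unitary.conjStarAlgAut_apply, ← Unitary.coe_star,
      CStarRing.norm_mul_coe_unitary, CStarRing.norm_coe_unitary_mul, l2_opNorm_diagonal]
    simp [Pi.norm_def]
  rw [hnorm, hP.1.trace_eq_sum_eigenvalues, ← RCLike.ofReal_sum, RCLike.ofReal_re,
    pi_norm_le_iff_of_nonneg (Finset.sum_nonneg fun i _ => hP.eigenvalues_nonneg i)]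
  intro i
  rw [Real.norm_of_nonneg (hP.eigenvalues_nonneg i)]
  exact Finset.single_le_sum (fun j _ => hP.eigenvalues_nonneg j) (Finset.mem_univ i)

open scoped MatrixOrder in
theorem span_posSemidef {n : Type*} [Finite n] :
    Submodule.span ℂ {P : Matrix n n ℂ | P.PosSemidef} = ⊤ := by
  classical
  have := Fintype.ofFinite n
  simpa only [nonneg_iff_posSemidef] using CStarAlgebra.span_nonneg (A := Matrix n n ℂ)

theorem isBounded_image_positiveTraceNonincreasing [DecidableEq n] (X : Matrix n n ℂ) :
    Bornology.IsBounded
      ((fun T : Module.End ℂ (Matrix n n ℂ) => T X) '' positiveTraceNonincreasing n) := by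
  rw [isBounded_iff_forall_norm_le]
  simp only [Set.forall_mem_image, SetLike.mem_coe]
  have hX : X ∈ Submodule.span ℂ {P : Matrix n n ℂ | P.PosSemidef} := by
    rw [span_posSemidef]
    exact Submodule.mem_top
  induction hX using Submodule.span_induction with
  | mem P hP =>
    refine ⟨P.trace.re, fun T hT => ?_⟩
    obtain ⟨hTP, htr⟩ := hT P hP
    exact (norm_le_re_trace_of_posSemidef hTP).trans (Complex.le_def.1 htr).1
  | zero => exact ⟨0, fun T _ => by rw [map_zero, norm_zero]⟩
  | add X Y _ _ ihX ihY =>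
    obtain ⟨C, hC⟩ := ihX
    obtain ⟨D, hD⟩ := ihY
    exact ⟨C + D, fun T hT => map_add T X Y ▸ norm_add_le_of_le (hC hT) (hD hT)⟩
  | smul c X _ ih =>
    obtain ⟨C, hC⟩ := ih
    refine ⟨‖c‖ * C, fun T hT => ?_⟩
    rw [map_smul, norm_smul]
    exact mul_le_mul_of_nonneg_left (hC hT) (norm_nonneg c)

end Positive

section Choi

variable {d : ℕ} {E : Matrix (Fin d) (Fin d) ℂ →ₗ[ℂ] Matrix (Fin d) (Fin d) ℂ}

variable (E) in
theorem choiMatrix_apply (a i b j : Fin d) :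
    ChoiMatrix E (a, i) (b, j) = E (single i j 1) a b := by
  simp [ChoiMatrix, Matrix.sum_apply, single_apply, ite_and]

theorem exists_kraus_of_posSemidef_choiMatrix (hE : (ChoiMatrix E).PosSemidef) :
    ∃ K : Fin d × Fin d → Matrix (Fin d) (Fin d) ℂ, ∀ X, E X = ∑ k, K k * X * (K k)ᴴ := by
  obtain ⟨Q, hQ⟩ : ∃ Q, ChoiMatrix E = Qᴴ * Q := by
    open scoped MatrixOrder in
    exact CStarAlgebra.nonneg_iff_eq_star_mul_self.mp hE.nonneg
  let K (k : Fin d × Fin d) : Matrix (Fin d) (Fin d) ℂ := of fun a i => star (Q k (a, i))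
  have hK_single (i j : Fin d) : E (single i j 1) = ∑ k, K k * single i j 1 * (K k)ᴴ := by
    ext a b
    simp [← choiMatrix_apply, hQ, K, mul_apply, Matrix.sum_apply, single_apply, ite_and]
  have hE_eq : E = ∑ k, LinearMap.mulLeftRight ℂ (K k, (K k)ᴴ) :=
    ext_linearMap _ fun i j => LinearMap.ext_ring <| by simpa using hK_single i j
  exact ⟨K, fun X => by simp [hE_eq]⟩

theorem IsQuantumChannel.mem_positiveTraceNonincreasing (hE : IsQuantumChannel E) :
    E ∈ positiveTraceNonincreasing (Fin d) := by
  intro P hP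
  refine ⟨?_, (hE.2 P).le⟩
  obtain ⟨K, hK⟩ := exists_kraus_of_posSemidef_choiMatrix hE.1
  rw [hK]
  exact posSemidef_sum _ fun k _ => hP.mul_mul_conjTranspose_same (K k)

end Choi

open scoped Matrix.Norms.L2Operator in
theorem commuting_lindbladian_frustrationFree_general {n ι : Type*} [Fintype n] [Fintype ι]
    (E : ι → Module.End ℂ (Matrix n n ℂ)) (hE : ∀ i, E i ∈ positiveTraceNonincreasing n)
    (L : ι → Module.End ℂ (Matrix n n ℂ)) (hL : ∀ i, L i = E i - LinearMap.id)
    (hcomm : ∀ i j, L i ∘ₗ L j = L j ∘ₗ L i) (X : Matrix n n ℂ) (hX : ∑ i, L i X = 0) (i : ι) :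
    L i X = 0 := by
  classical
  have hE_eq (j : ι) : E j = L j + 1 := by rw [hL j]; exact (sub_add_cancel _ _).symm
  have hE_comm (j k : ι) : Commute (E j) (E k) := by
    simpa only [hE_eq] using (Commute.add_left (hcomm j k) (.one_left _)).add_right (.one_right _)
  have hcard : (Fintype.card ι : ℝ) ≠ 0 := Nat.cast_ne_zero.2 (Fintype.card_pos_iff.2 ⟨i⟩ |>.ne')
  have hfix : ∑ j, (Fintype.card ι : ℝ)⁻¹ • E j X = X := by
    simp [hE_eq, ← Finset.smul_sum, Finset.sum_add_distrib, hX, ← Nat.cast_smul_eq_nsmul ℝ, hcard]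
  have hbdd := (isBounded_image_positiveTraceNonincreasing X).subset <| Set.image_mono <|
    Submonoid.closure_le.2 <| Set.range_subset_iff.2 hE
  have hEX : E i X = X :=
    apply_eq_self_of_sum_smul_apply_eq_self (fun _ => by positivity) (by simp [hcard]) hE_comm
      hbdd hfix (by positivity)
  rw [hL, LinearMap.sub_apply, hEX, LinearMap.id_apply, sub_self]

/-- if the Lindbladians `L i = E i - id` associated to quantum channels
`E i` pairwise commute, then `∑ i, L i` is frustration-free. -/
theorem commuting_lindbladian_frustrationFree {d N : ℕ}
    (E : Fin N → (Matrix (Fin d) (Fin d) ℂ →ₗ[ℂ] Matrix (Fin d) (Fin d) ℂ))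
    (hE : ∀ i, IsQuantumChannel (E i))
    (L : Fin N → (Matrix (Fin d) (Fin d) ℂ →ₗ[ℂ] Matrix (Fin d) (Fin d) ℂ))
    (hL : ∀ i, L i = E i - LinearMap.id)
    (hcomm : ∀ i j, (L i) ∘ₗ (L j) = (L j) ∘ₗ (L i))
    (X : Matrix (Fin d) (Fin d) ℂ)
    (hX : ∑ i, L i X = 0) :
    ∀ i, L i X = 0 :=
  commuting_lindbladian_frustrationFree_general E
    (fun i => (hE i).mem_positiveTraceNonincreasing) L hL hcomm X hX
end

section
/- Let V be a finite-dimensional complex normed vector space and ‖·‖ the induced operator norm on linear endomorphisms of V. Let L_1, …, L_N be pairwise commuting linear endomorphisms of V, let P_1, …, P_N be linear endomorphisms of V, and let γ_1, …, γ_N > 0 be real numbers such that for all t ≥ 0 and all i: ‖exp(t L_i)‖ ≤ 1, ‖P_i‖ ≤ 1, and ‖exp(t L_i) − P_i‖ ≤ e^{−γ_i t}. Then for all t ≥ 0, ‖exp(t Σ_{i=1}^N L_i) − P_1 ∘ P_2 ∘ ⋯ ∘ P_N‖ ≤ N e^{−γ t}, where γ := min_i γ_i. In particular the evolution is rapid-mixing: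 the distance to the limiting projector decays exponentially with a rate γ independent of N and a prefactor linear in N. -/
open scoped NNReal

/-!
Since the `L i` commute, `exp (t ∑ L i)` is the product of the `exp (t L i)`, and two products of
contractions differ by at most the sum of the distances between corresponding factors: in the
telescoping sum that swaps one factor `exp (t L i)` for `P i` at a time, the other factors of each
term have norm at most one.
-/

section SeminormedRing

variable {R : Type*} [SeminormedRing R]

theorem norm_mul_list_prod_le (b : R) {l : List R} (hl : ∀ a ∈ l, ‖a‖ ≤ 1) :
    ‖b * l.prod‖ ≤ ‖b‖ := by
  induction l generalizing b with
  | nil => simp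
  | cons a l ih =>
    rw [List.forall_mem_cons] at hl
    calc ‖b * (a :: l).prod‖ = ‖b * a * l.prod‖ := by rw [List.prod_cons, mul_assoc]
      _ ≤ ‖b * a‖ := ih (b * a) hl.2
      _ ≤ ‖b‖ * ‖a‖ := norm_mul_le b a
      _ ≤ ‖b‖ := mul_le_of_le_one_right (norm_nonneg b) hl.1

theorem norm_list_prod_map_sub_prod_map_le {ι : Type*} {l : List ι} {f g : ι → R}
    (hf : ∀ i ∈ l, ‖f i‖ ≤ 1) (hg : ∀ i ∈ l, ‖g i‖ ≤ 1) :
    ‖(l.map f).prod - (l.map g).prod‖ ≤ (l.map fun i ↦ ‖f i - g i‖).sum := by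
  induction l with
  | nil => simp
  | cons i l ih =>
    rw [List.forall_mem_cons] at hf hg
    simp only [List.map_cons, List.prod_cons, List.sum_cons]
    set F := (l.map f).prod
    set G := (l.map g).prod
    have first_factor : ‖(f i - g i) * F‖ ≤ ‖f i - g i‖ :=
      norm_mul_list_prod_le _ (List.forall_mem_map.mpr hf.2)
    have other_factors : ‖g i * (F - G)‖ ≤ ‖F - G‖ :=
      (norm_mul_le _ _).trans (mul_le_of_le_one_left (norm_nonneg _) hg.1)
    calc ‖f i * F - g i * G‖ = ‖(f i - g i) * F + g i * (F - G)‖ := by congr 1; noncomm_ring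
      _ ≤ ‖(f i - g i) * F‖ + ‖g i * (F - G)‖ := norm_add_le _ _
      _ ≤ ‖f i - g i‖ + (l.map fun i ↦ ‖f i - g i‖).sum :=
        add_le_add first_factor (other_factors.trans (ih hf.2 hg.2))

end SeminormedRing

section Exponential

variable {A : Type*} [NormedRing A] [CompleteSpace A]

theorem exp_list_sum_of_commute [NormedAlgebra ℚ A] {l : List A} (hl : l.Pairwise Commute) :
    NormedSpace.exp l.sum = (l.map NormedSpace.exp).prod := by
  induction l with
  | nil => simp
  | cons a l ih =>
    rw [List.pairwise_cons] at hl
    rw [List.sum_cons, NormedSpace.exp_add_of_commute (Commute.list_sum_right _ _ hl.1), ih hl.2,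
      List.map_cons, List.prod_cons]

theorem norm_exp_sum_sub_prod_le [NormedAlgebra ℚ A] {n : ℕ} {L P : Fin n → A}
    (hcomm : ∀ i j, Commute (L i) (L j)) (hL : ∀ i, ‖NormedSpace.exp (L i)‖ ≤ 1)
    (hP : ∀ i, ‖P i‖ ≤ 1) :
    ‖NormedSpace.exp (∑ i, L i) - (List.ofFn P).prod‖ ≤
      ∑ i, ‖NormedSpace.exp (L i) - P i‖ := by
  have exp_sum : NormedSpace.exp (∑ i, L i) =
      (List.ofFn fun i ↦ NormedSpace.exp (L i)).prod := by
    rw [← List.sum_ofFn, exp_list_sum_of_commute (List.pairwise_ofFn.mpr fun i j _ ↦ hcomm i j),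
      List.map_ofFn, Function.comp_def]
  rw [exp_sum, ← List.sum_ofFn]
  simp only [List.ofFn_eq_map]
  exact norm_list_prod_map_sub_prod_map_le (fun i _ ↦ hL i) (fun i _ ↦ hP i)

theorem rapid_mixing_of_commuting_general [NormedAlgebra ℝ A] {N : ℕ} (L P : Fin N → A)
    (γ : Fin N → ℝ) (hcomm : ∀ i j, Commute (L i) (L j))
    (hcontr : ∀ t : ℝ, 0 ≤ t → ∀ i, ‖NormedSpace.exp (t • L i)‖ ≤ 1)
    (hP : ∀ i, ‖P i‖ ≤ 1)
    (hdist : ∀ t : ℝ, 0 ≤ t → ∀ i,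
      ‖NormedSpace.exp (t • L i) - P i‖ ≤ Real.exp (-(γ i) * t)) :
    ∀ t : ℝ, 0 ≤ t →
      ‖NormedSpace.exp (t • ∑ i, L i) - (List.ofFn P).prod‖ ≤ ∑ i, Real.exp (-(γ i) * t) := by
  intro t ht
  let _ : NormedAlgebra ℚ A := NormedAlgebra.restrictScalars ℚ ℝ A
  have hcomm_smul (i j : Fin N) : Commute (t • L i) (t • L j) :=
    ((hcomm i j).smul_left t).smul_right t
  rw [Finset.smul_sum]
  exact (norm_exp_sum_sub_prod_le hcomm_smul (hcontr t ht) hP).trans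
    (Finset.sum_le_sum fun i _ ↦ hdist t ht i)

end Exponential

theorem sum_exp_neg_mul_le_card_mul {ι : Type*} [Fintype ι] (γ : ι → ℝ) {t : ℝ} (ht : 0 ≤ t) :
    ∑ i, Real.exp (-(γ i) * t) ≤ Fintype.card ι * Real.exp (-(⨅ i, γ i) * t) := by
  rw [← nsmul_eq_mul]
  refine Finset.sum_le_card_nsmul _ _ _ fun i _ ↦ ?_
  have iInf_le : ⨅ i, γ i ≤ γ i := ciInf_le (Set.finite_range γ).bddBelow i
  gcongr

/-- for pairwise commuting generators `L i` whose one-parameter semigroups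
are contractive and converge exponentially fast (with rate `γ i`) to maps `P i` of norm
at most one, the semigroup generated by `∑ i, L i` converges to the composition
`P 0 ∘ P 1 ∘ ⋯ ∘ P (N-1)` exponentially fast with rate `γ = min_i γ i` and prefactor `N`:
rapid mixing. -/
theorem rapid_mixing_of_commuting {V : Type*} [NormedAddCommGroup V] [NormedSpace ℂ V]
    [FiniteDimensional ℂ V] {N : ℕ} [NeZero N]
    (L P : Fin N → (V →L[ℂ] V)) (γ : Fin N → ℝ)
    (hγ : ∀ i, 0 < γ i)
    (hcomm : ∀ i j, L i * L j = L j * L i)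
    (hcontr : ∀ t : ℝ, 0 ≤ t → ∀ i, ‖NormedSpace.exp (t • L i)‖ ≤ 1)
    (hP : ∀ i, ‖P i‖ ≤ 1)
    (hdist : ∀ t : ℝ, 0 ≤ t → ∀ i,
      ‖NormedSpace.exp (t • L i) - P i‖ ≤ Real.exp (-(γ i) * t)) :
    ∀ t : ℝ, 0 ≤ t →
      ‖NormedSpace.exp (t • ∑ i, L i) - (List.ofFn P).prod‖ ≤
        N * Real.exp (-(⨅ i, γ i) * t) := by
  have : CompleteSpace V := FiniteDimensional.complete ℂ V
  intro t ht
  simpa only [Fintype.card_fin] using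
    (rapid_mixing_of_commuting_general L P γ hcomm hcontr hP hdist t ht).trans
      (sum_exp_neg_mul_le_card_mul γ ht)
end

section
/- Fix N ≥ 3 and work with complex matrices indexed by bit strings x, y : Fin N → Fin 2. Let Z^{⊗N} be the diagonal matrix with (x, x)-entry ∏_{k} (−1)^{x(k)}, and let ρ := 2^{−N} (I + Z^{⊗N}) be the boundary state of the toric code. Then: (a) ρ is positive semidefinite with Tr(ρ) = 1; (b) for any two sites i ≠ j and any A, B ∈ M₂(ℂ), letting A_i denote the embedding of A at site i (the matrix with (x, y)-entry A_{x(i), y(i)} · ∏_{k ≠ i} [x(k) = y(k)], and similarly B_j), one has Tr(ρ · A_i · B_j) = Tr(ρ · A_i) · Tr(ρ · B_j). In particular all connected two-point correlation functions of ρ between distinct sites vanish. -/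
open Matrix
open scoped ComplexOrder

/-- The embedding of a one-qubit operator `A` at site `i` of an `N`-qubit chain. -/
def embedAt {N : ℕ} (A : Matrix (Fin 2) (Fin 2) ℂ) (i : Fin N) :
    Matrix (Fin N → Fin 2) (Fin N → Fin 2) ℂ :=
  fun x y => A (x i) (y i) * ∏ k ∈ Finset.univ.erase i, (if x k = y k then (1 : ℂ) else 0)

/-!
The operator `Z` is a traceless Hermitian involution, so `Z^{⊗N}` is a Hermitian involution and
`1 + Z^{⊗N}` is twice a projection. In the trace of `ρ` against a product operator that is trivial
at some site, that site contributes the factor `tr Z = 0` to the `Z^{⊗N}` term. Hence `ρ` is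
indistinguishable from the maximally mixed state by such operators, and the maximally mixed state
is a product state.
-/

section PiKronecker

variable {ι R : Type*} [Fintype ι] [CommSemiring R] {l m n : ι → Type*}

/-- The Kronecker product of a finite family of matrices, with rows and columns indexed by the
dependent functions choosing a row or a column of each factor. -/
def piKronecker (M : ∀ i, Matrix (m i) (n i) R) : Matrix (∀ i, m i) (∀ i, n i) R :=
  of fun x y => ∏ i, M i (x i) (y i)

theorem piKronecker_apply (M : ∀ i, Matrix (m i) (n i) R) (x : ∀ i, m i) (y : ∀ i, n i) :
    piKronecker M x y = ∏ i, M i (x i) (y i) :=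
  rfl

theorem piKronecker_diagonal [∀ i, DecidableEq (n i)] (d : ∀ i, n i → R) :
    piKronecker (fun i => diagonal (d i)) = diagonal fun x => ∏ i, d i (x i) := by
  ext x y
  rw [piKronecker_apply]
  obtain rfl | hxy := eq_or_ne x y
  · simp only [diagonal_apply_eq]
  · obtain ⟨i, hi⟩ := Function.ne_iff.1 hxy
    rw [diagonal_apply_ne _ hxy]
    exact Finset.prod_eq_zero (Finset.mem_univ i) (diagonal_apply_ne _ hi)

theorem piKronecker_one [∀ i, DecidableEq (n i)] :
    piKronecker (1 : ∀ i, Matrix (n i) (n i) R) = 1 := by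
  have h := piKronecker_diagonal fun i (_ : n i) => (1 : R)
  simp only [Finset.prod_const_one, diagonal_one] at h
  exact h

theorem piKronecker_conjTranspose [StarRing R] (M : ∀ i, Matrix (m i) (n i) R) :
    (piKronecker M)ᴴ = piKronecker fun i => (M i)ᴴ := by
  ext x y
  simp only [conjTranspose_apply, piKronecker_apply, star_prod]

variable [DecidableEq ι]

theorem piKronecker_mul [∀ i, Fintype (m i)] (M : ∀ i, Matrix (l i) (m i) R)
    (M' : ∀ i, Matrix (m i) (n i) R) :
    piKronecker M * piKronecker M' = piKronecker fun i => M i * M' i := by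
  ext x z
  simp only [mul_apply, piKronecker_apply, ← Finset.prod_mul_distrib]
  exact (Fintype.prod_sum fun i (a : m i) => M i (x i) a * M' i a (z i)).symm

theorem trace_piKronecker [∀ i, Fintype (n i)] (M : ∀ i, Matrix (n i) (n i) R) :
    (piKronecker M).trace = ∏ i, (M i).trace :=
  (Fintype.prod_sum fun i (a : n i) => M i a a).symm

end PiKronecker

section ParityState

variable {ι n : Type*} [Fintype ι] [Fintype n] [DecidableEq n]

section Field

variable {K : Type*} [Field K]

variable (ι) in
/-- The operator `d ^ (-N) * (1 + Z^{⊗N})` on `N = card ι` sites of dimension `d = card n`. When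
`Z` is a traceless Hermitian involution, it is the normalized projection onto the `+1` eigenspace
of `Z^{⊗N}`. -/
def parityState (Z : Matrix n n K) : Matrix (ι → n) (ι → n) K :=
  ((Fintype.card n : K) ^ Fintype.card ι)⁻¹ • (1 + piKronecker fun _ => Z)

variable [DecidableEq ι]

/-- The operator acting as `A` at site `i` and trivially at every other site. -/
def siteOperator (i : ι) (A : Matrix n n K) : Matrix (ι → n) (ι → n) K :=
  piKronecker (Pi.mulSingle i A)

theorem trace_parityState_mul_piKronecker {Z : Matrix n n K} (hZ : Z.trace = 0)
    {M : ι → Matrix n n K} {k : ι} (hk : M k = 1) :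
    (parityState ι Z * piKronecker M).trace = ∏ i, (M i).trace / Fintype.card n := by
  have trace_Z_term : ∏ i, (Z * M i).trace = 0 :=
    Finset.prod_eq_zero (Finset.mem_univ k) (by rw [hk, mul_one, hZ])
  rw [parityState, smul_mul_assoc, trace_smul, add_mul, one_mul, trace_add, piKronecker_mul,
    trace_piKronecker, trace_piKronecker, trace_Z_term, add_zero, Finset.prod_div_distrib,
    Finset.prod_const, Finset.card_univ, smul_eq_mul, div_eq_inv_mul]

variable [CharZero K] [Nonempty n]

theorem trace_parityState [Nonempty ι] {Z : Matrix n n K} (hZ : Z.trace = 0) :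
    (parityState ι Z).trace = 1 := by
  have h := trace_parityState_mul_piKronecker hZ (M := 1) (k := Classical.arbitrary ι) rfl
  simpa [piKronecker_one] using h

theorem trace_parityState_mul_piKronecker_mul_piKronecker {Z : Matrix n n K} (hZ : Z.trace = 0)
    {M M' : ι → Matrix n n K} (hdisj : ∀ i, M i = 1 ∨ M' i = 1) {k : ι} (hk : M k = 1)
    (hk' : M' k = 1) :
    (parityState ι Z * piKronecker M * piKronecker M').trace =
      (parityState ι Z * piKronecker M).trace * (parityState ι Z * piKronecker M').trace := by
  have hcard : (Fintype.card n : K) ≠ 0 := Nat.cast_ne_zero.2 Fintype.card_ne_zero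
  rw [mul_assoc, piKronecker_mul,
    trace_parityState_mul_piKronecker hZ (k := k) (by rw [hk, hk', mul_one]),
    trace_parityState_mul_piKronecker hZ hk, trace_parityState_mul_piKronecker hZ hk',
    ← Finset.prod_mul_distrib]
  refine Finset.prod_congr rfl fun i _ => ?_
  rcases hdisj i with h | h <;> simp [h, hcard]

theorem trace_parityState_mul_siteOperator_mul_siteOperator (hι : 3 ≤ Fintype.card ι)
    {Z : Matrix n n K} (hZ : Z.trace = 0) {i j : ι} (hij : i ≠ j) (A B : Matrix n n K) :
    (parityState ι Z * siteOperator i A * siteOperator j B).trace =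
      (parityState ι Z * siteOperator i A).trace * (parityState ι Z * siteOperator j B).trace := by
  obtain ⟨k, hki, hkj⟩ : ∃ k, k ≠ i ∧ k ≠ j :=
    ENat.exists_ne_ne_of_three_le (by simpa using hι) i j
  have mulSingle_eq_one {l m : ι} (hlm : l ≠ m) (C : Matrix n n K) :
      (Pi.mulSingle m C : ι → Matrix n n K) l = 1 :=
    Pi.mulSingle_eq_of_ne (M := fun _ => Matrix n n K) hlm C
  refine trace_parityState_mul_piKronecker_mul_piKronecker hZ (fun l => ?_)
    (mulSingle_eq_one hki A) (mulSingle_eq_one hkj B)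
  obtain rfl | hl := eq_or_ne l i
  · exact .inr (mulSingle_eq_one hij B)
  · exact .inl (mulSingle_eq_one hl A)

end Field

section RCLike

variable {𝕜 : Type*} [RCLike 𝕜]

theorem posSemidef_one_add_of_mul_self_eq_one {S : Matrix n n 𝕜} (hS : S.IsHermitian)
    (hSS : S * S = 1) : (1 + S).PosSemidef := by
  have eq_smul_sq : 1 + S = (2⁻¹ : 𝕜) • ((1 + S)ᴴ * (1 + S)) := by
    rw [conjTranspose_add, conjTranspose_one, hS.eq, add_mul, one_mul, mul_add, mul_one, hSS]
    module
  rw [eq_smul_sq]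
  exact (posSemidef_conjTranspose_mul_self _).smul (by positivity)

theorem posSemidef_parityState {Z : Matrix n n 𝕜} (hZ : Z.IsHermitian) (hZZ : Z * Z = 1) :
    (parityState ι Z).PosSemidef := by
  classical
  refine (posSemidef_one_add_of_mul_self_eq_one ?_ ?_).smul (by positivity)
  · rw [IsHermitian, piKronecker_conjTranspose, hZ.eq]
  · rw [piKronecker_mul, hZZ]
    exact piKronecker_one

theorem toric_code_boundary_short_range_general [DecidableEq ι] [Nonempty n]
    (hι : 3 ≤ Fintype.card ι) {Z : Matrix n n 𝕜} (hZ : Z.IsHermitian) (hZZ : Z * Z = 1)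
    (hZtr : Z.trace = 0) :
    (parityState ι Z).PosSemidef ∧ (parityState ι Z).trace = 1 ∧
    ∀ i j : ι, i ≠ j → ∀ A B : Matrix n n 𝕜,
      (parityState ι Z * siteOperator i A * siteOperator j B).trace =
        (parityState ι Z * siteOperator i A).trace *
          (parityState ι Z * siteOperator j B).trace := by
  have : Nonempty ι := Fintype.card_pos_iff.1 (by omega)
  exact ⟨posSemidef_parityState hZ hZZ, trace_parityState hZtr, fun i j hij =>
    trace_parityState_mul_siteOperator_mul_siteOperator hι hZtr hij⟩

end RCLike

end ParityState

theorem embedAt_eq_siteOperator {N : ℕ} (A : Matrix (Fin 2) (Fin 2) ℂ) (i : Fin N) :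
    embedAt A i = siteOperator i A := by
  ext x y
  rw [siteOperator, piKronecker_apply, ← Finset.mul_prod_erase _ _ (Finset.mem_univ i),
    Pi.mulSingle_eq_same, embedAt]
  congr 1
  refine Finset.prod_congr rfl fun k hk => ?_
  rw [Pi.mulSingle_eq_of_ne (Finset.ne_of_mem_erase hk), one_apply]

/-- The Pauli matrix `Z`, with the sign written as `(-1) ^ a` on the basis vector `a`. -/
def pauliZ : Matrix (Fin 2) (Fin 2) ℂ :=
  diagonal fun a => (-1) ^ (a : ℕ)

theorem isHermitian_pauliZ : pauliZ.IsHermitian :=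
  isHermitian_diagonal_iff.2 fun a => by simp [isSelfAdjoint_iff]

theorem pauliZ_mul_self : pauliZ * pauliZ = 1 := by
  simp only [pauliZ, diagonal_mul_diagonal, ← mul_pow, neg_one_mul, neg_neg, one_pow, diagonal_one]

theorem trace_pauliZ : pauliZ.trace = 0 := by
  simp [pauliZ, trace_diagonal]

theorem parityState_pauliZ (N : ℕ) :
    parityState (Fin N) pauliZ = ((2 : ℂ) ^ N)⁻¹ •
      (1 + diagonal fun x : Fin N → Fin 2 => ∏ k, (-1 : ℂ) ^ (x k : ℕ)) := by
  simp only [parityState, pauliZ, piKronecker_diagonal, Fintype.card_fin, Nat.cast_ofNat]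

/-- the boundary state of the toric code,
`ρ = 2^{-N} (I + Z^{⊗N})`, is a density matrix all of whose connected two-point
correlation functions between distinct sites vanish. -/
theorem toric_code_boundary_short_range {N : ℕ} (hN : 3 ≤ N)
    (ZN : Matrix (Fin N → Fin 2) (Fin N → Fin 2) ℂ)
    (hZN : ZN = Matrix.diagonal (fun x => ∏ k, (-1 : ℂ) ^ ((x k : ℕ))))
    (ρ : Matrix (Fin N → Fin 2) (Fin N → Fin 2) ℂ)
    (hρ : ρ = ((2 : ℂ) ^ N)⁻¹ • ((1 : Matrix (Fin N → Fin 2) (Fin N → Fin 2) ℂ) + ZN)) :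
    ρ.PosSemidef ∧ ρ.trace = 1 ∧
    ∀ i j : Fin N, i ≠ j → ∀ A B : Matrix (Fin 2) (Fin 2) ℂ,
      (ρ * embedAt A i * embedAt B j).trace =
        (ρ * embedAt A i).trace * (ρ * embedAt B j).trace := by
  rw [hρ, hZN, ← parityState_pauliZ]
  simpa only [embedAt_eq_siteOperator] using toric_code_boundary_short_range_general
    (by rwa [Fintype.card_fin]) isHermitian_pauliZ pauliZ_mul_self trace_pauliZ
end
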